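/- Let C₅ = ⟨(x+1)^a + u(x+1)^{t₁} h₁(x) + u²(x+1)^{t₂} h₂(x)⟩ be a Type 5 ideal of 𝓡, where 1 ≤ a ≤ 2^s − 1, h₁ and h₂ are each either 0 or a unit of 𝓚, 0 ≤ t₁ < U with U = a if h₁ = 0 and U = min{a, 2^s − a + t₁} if h₁ ≠ 0, and 0 ≤ t₂ < V, where V = min{k ≥ 0 : u²(x+1)^k ∈ C₅}. Then V equals: (1) a, if h₁ = 0 and h₂ = 0; (2) min{a, 2^s − a + t₂}, if h₁ = 0 and h₂ ≠ 0; (3) min{a, 2^s − 2a + 2t₁}, if h₁ ≠ 0, h₂ = 0 and a ≤ 2^s − a + t₁; (4) min{a, 2^s − a + t₂, 2^s − 2a + 2t₁}, if h₁ ≠ 0, h₂ ≠ 0, a ≤ 2^s − a + t₁ and 2t₁ ≠ a + t₂; (5) min{a, 2^s − a + t₂ + α₁}, if h₁ ≠ 0, h₂ ≠ 0, a ≤ 2^s − a + t₁ and 2t₁ = a + t₂; (6) t₁, if h₁ ≠ 0, h₂ = 0 and a ≥ 2^s − a + t₁; (7) min{t₁, a + t₂ − t₁}, if h₁ ≠ 0,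 h₂ ≠ 0, a ≥ 2^s − a + t₁ and 2t₁ ≠ a + t₂; (8) min{2^s + t₁ − a, t₁ + α₁}, if h₁ ≠ 0, h₂ ≠ 0, a ≥ 2^s − a + t₁ and 2t₁ = a + t₂; where α₁ = max{0 ≤ k ≤ 2^s : (x+1)^k divides h₁(x) − h₂(x) h₁(x)^{-1} in 𝓚}. -/

import Mathlib

noncomputable section

open Polynomial

/-- The finite field `GF(2^m)`. -/
abbrev Fq (m : ℕ) : Type := GaloisField 2 m

/-- The ring `R₃ = F[u]/⟨u³⟩`. -/
abbrev R3 (m : ℕ) : Type := AdjoinRoot (X ^ 3 : (Fq m)[X])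

/-- The polynomial `x^{2^s} + 1` over `R₃`. -/
abbrev gR (m s : ℕ) : (R3 m)[X] := X ^ (2 ^ s) + 1

/-- The polynomial `x^{2^s} + 1` over `F`. -/
abbrev gK (m s : ℕ) : (Fq m)[X] := X ^ (2 ^ s) + 1

/-- The ring `𝓡 = R₃[x]/⟨x^{2^s}+1⟩`. -/
abbrev RR (m s : ℕ) : Type := AdjoinRoot (gR m s)

/-- The ring `𝓚 = F[x]/⟨x^{2^s}+1⟩`. -/
abbrev KK (m s : ℕ) : Type := AdjoinRoot (gK m s)

/-- The element `u` of `R₃`. -/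
def uu (m : ℕ) : R3 m := AdjoinRoot.root _

/-- The element `u` of `𝓡`. -/
def uR (m s : ℕ) : RR m s := algebraMap (R3 m) (RR m s) (uu m)

/-- The element `x` of `𝓡`. -/
def xR (m s : ℕ) : RR m s := AdjoinRoot.root _

/-- The element `x` of `𝓚`. -/
def xK (m s : ℕ) : KK m s := AdjoinRoot.root _

lemma gR_monic (m s : ℕ) : (gR m s).Monic := by
  have h : (gR m s) = X ^ (2 ^ s) + C 1 := by simp [gR]
  rw [h]; exact monic_X_pow_add_C _ (by positivity)

lemma gK_monic (m s : ℕ) : (gK m s).Monic := by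
  have h : (gK m s) = X ^ (2 ^ s) + C 1 := by simp [gK]
  rw [h]; exact monic_X_pow_add_C _ (by positivity)

/-- The standard representative (of degree `< 2^s`) of an element of `𝓡`. -/
def repR (m s : ℕ) (c : RR m s) : (R3 m)[X] := AdjoinRoot.modByMonicHom (gR_monic m s) c

/-- The standard representative (of degree `< 2^s`) of an element of `𝓚`. -/
def repK (m s : ℕ) (c : KK m s) : (Fq m)[X] := AdjoinRoot.modByMonicHom (gK_monic m s) c

/-- The `j`-th coefficient of the standard representative of `c ∈ 𝓡`. -/
def coeffR (m s : ℕ) (c : RR m s) (j : ℕ) : R3 m := (repR m s c).coeff j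

/-- The dot product on `𝓡`. -/
def dotR (m s : ℕ) (c d : RR m s) : R3 m :=
  ∑ j ∈ Finset.range (2 ^ s), coeffR m s c j * coeffR m s d j

/-- The dual of a set of codewords. -/
def dualSet (m s : ℕ) (S : Set (RR m s)) : Set (RR m s) :=
  {c | ∀ d ∈ S, dotR m s c d = 0}

/-- A cyclic code (ideal of `𝓡`) is self-dual if it coincides with its dual. -/
def IsSelfDual (m s : ℕ) (C : Ideal (RR m s)) : Prop :=
  (C : Set (RR m s)) = dualSet m s (C : Set (RR m s))

/-- The annihilator of a set of codewords. -/
def annSet (m s : ℕ) (S : Set (RR m s)) : Set (RR m s) :=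
  {c | ∀ d ∈ S, c * d = 0}

/-- The reciprocal `c*(x) = x^{deg c} c(x⁻¹)` of an element of `𝓡`. -/
def recip (m s : ℕ) (c : RR m s) : RR m s :=
  xR m s ^ (repR m s c).natDegree *
    Polynomial.aeval (Ring.inverse (xR m s)) (repR m s c)

/-- Reduction `R₃ → F` modulo `u`. -/
def epsR3 (m : ℕ) : R3 m →+* Fq m :=
  AdjoinRoot.lift (RingHom.id (Fq m)) 0 (by simp)

lemma xK_pow_add_one (m s : ℕ) : (xK m s) ^ (2 ^ s) + 1 = 0 := by
  have h := AdjoinRoot.eval₂_root (gK m s)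
  simpa [gK, xK] using h

lemma xR_pow_add_one (m s : ℕ) : (xR m s) ^ (2 ^ s) + 1 = 0 := by
  have h := AdjoinRoot.eval₂_root (gR m s)
  simpa [gR, xR] using h

/-- Reduction `μ : 𝓡 → 𝓚` modulo `u`. -/
def muRK (m s : ℕ) : RR m s →+* KK m s :=
  AdjoinRoot.lift ((algebraMap (Fq m) (KK m s)).comp (epsR3 m)) (xK m s) (by
    simp only [gR, eval₂_add, eval₂_pow, eval₂_X, eval₂_one]
    exact xK_pow_add_one m s)

/-- The natural inclusion `𝓚 → 𝓡`. -/
def KtoR (m s : ℕ) : KK m s →+* RR m s :=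
  AdjoinRoot.lift ((algebraMap (R3 m) (RR m s)).comp (algebraMap (Fq m) (R3 m))) (xR m s) (by
    simp only [gK, eval₂_add, eval₂_pow, eval₂_X, eval₂_one]
    exact xR_pow_add_one m s)

/-- The `i`-th torsion code of a set `S ⊆ 𝓡`. -/
def TorSet (m s : ℕ) (S : Set (RR m s)) (i : ℕ) : Set (KK m s) :=
  muRK m s '' {f | (uR m s) ^ i * f ∈ S}

/-- The torsion degree `T_i`: the (unique) `k` with `Tor_i = ⟨(x+1)^k⟩`. -/
def Tdeg (m s : ℕ) (S : Set (RR m s)) (i : ℕ) : ℕ :=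
  sInf {k | TorSet m s S i =
    ((Ideal.span {(xK m s + 1) ^ k} : Ideal (KK m s)) : Set (KK m s))}

/-- Substitution `h(x) ↦ h(x⁻¹)` on `𝓚`. -/
def invSub (m s : ℕ) (h : KK m s) : KK m s :=
  Polynomial.aeval (Ring.inverse (xK m s)) (repK m s h)


/-- The combination predicate: `v` is the `u²`-coefficient of an element of the code lying in `u²𝓚`. -/
def CombP {K : Type*} [CommRing K] (y h₁ h₂ : K) (a t₁ t₂ : ℕ) (v : K) : Prop :=
  ∃ f0 f1 f2 : K, f0 * y ^ a = 0 ∧ f0 * (y ^ t₁ * h₁) + f1 * y ^ a = 0 ∧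
    f0 * (y ^ t₂ * h₂) + f1 * (y ^ t₁ * h₁) + f2 * y ^ a = v

lemma coeff_X3 {K : Type*} [CommRing K] (p : K[X]) (h : X ^ 3 ∣ p) :
    p.coeff 0 = 0 ∧ p.coeff 1 = 0 ∧ p.coeff 2 = 0 := by
  rw [X_pow_dvd_iff] at h
  exact ⟨h 0 (by norm_num), h 1 (by norm_num), h 2 (by norm_num)⟩

lemma combP_of_quot {K : Type*} [CommRing K] (y h₁ h₂ v : K) (a t₁ t₂ : ℕ)
    (r : AdjoinRoot (X ^ 3 : K[X]))
    (h : AdjoinRoot.root (X ^ 3 : K[X]) ^ 2 * AdjoinRoot.of _ v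
      = r * (AdjoinRoot.of _ y ^ a + AdjoinRoot.root _ * AdjoinRoot.of _ y ^ t₁ * AdjoinRoot.of _ h₁ +
        AdjoinRoot.root _ ^ 2 * AdjoinRoot.of _ y ^ t₂ * AdjoinRoot.of _ h₂)) :
    CombP y h₁ h₂ a t₁ t₂ v := by
  obtain ⟨p, rfl⟩ := AdjoinRoot.mk_surjective r
  have h' : AdjoinRoot.mk (X ^ 3 : K[X]) (X ^ 2 * C v) = AdjoinRoot.mk (X ^ 3 : K[X])
      (p * (C (y ^ a) + X * C (y ^ t₁ * h₁) + X ^ 2 * C (y ^ t₂ * h₂))) := by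
    simp only [map_mul, map_add, map_pow, AdjoinRoot.mk_X, AdjoinRoot.mk_C]
    rw [h]; ring
  rw [AdjoinRoot.mk_eq_mk] at h'
  obtain ⟨e0, e1, e2⟩ := coeff_X3 _ h'
  have hr : p * (C (y ^ a) + X * C (y ^ t₁ * h₁) + X ^ 2 * C (y ^ t₂ * h₂)) =
      p * C (y ^ a) + X ^ 1 * (p * C (y ^ t₁ * h₁)) + X ^ 2 * (p * C (y ^ t₂ * h₂)) := by ring
  rw [hr] at e0 e1 e2
  simp only [coeff_sub, coeff_add, coeff_X_pow_mul', coeff_mul_C] at e0 e1 e2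
  norm_num at e0 e1 e2
  refine ⟨p.coeff 0, p.coeff 1, p.coeff 2, ?_, ?_, ?_⟩
  · linear_combination e0
  · linear_combination -e1
  · linear_combination -e2

lemma mem_of_combP {K R : Type*} [CommRing K] [CommRing R] (ι : K →+* R) (u : R) (hu : u ^ 3 = 0)
    (y h₁ h₂ v : K) (a t₁ t₂ : ℕ) (h : CombP y h₁ h₂ a t₁ t₂ v) :
    u ^ 2 * ι v ∈ Ideal.span {ι y ^ a + u * ι y ^ t₁ * ι h₁ + u ^ 2 * ι y ^ t₂ * ι h₂} := by
  obtain ⟨f0, f1, f2, e0, e1, e2⟩ := h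
  rw [Ideal.mem_span_singleton']
  refine ⟨ι f0 + u * ι f1 + u ^ 2 * ι f2, ?_⟩
  have E0 := congrArg ι e0
  have E1 := congrArg ι e1
  have E2 := congrArg ι e2
  simp only [map_mul, map_add, map_pow, map_zero] at E0 E1 E2
  linear_combination E0 + u * E1 + u ^ 2 * E2 + (ι f1 * ι y ^ t₂ * ι h₂ + ι f2 * ι y ^ t₁ * ι h₁
    + u * ι f2 * ι y ^ t₂ * ι h₂) * hu

section chain

variable {K : Type*} [CommRing K]

lemma combP_mul {y h₁ h₂ v : K} {a t₁ t₂ : ℕ} (h : CombP y h₁ h₂ a t₁ t₂ v) (r : K) :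
    CombP y h₁ h₂ a t₁ t₂ (r * v) := by
  obtain ⟨f0, f1, f2, e0, e1, e2⟩ := h
  refine ⟨r * f0, r * f1, r * f2, ?_, ?_, ?_⟩
  · linear_combination r * e0
  · linear_combination r * e1
  · linear_combination r * e2

lemma combP_pow_of_unit {y h₁ h₂ w : K} {a t₁ t₂ n : ℕ}
    (h : CombP y h₁ h₂ a t₁ t₂ (y ^ n * w)) (hw : IsUnit w) :
    CombP y h₁ h₂ a t₁ t₂ (y ^ n) := by
  obtain ⟨w', hw'⟩ := hw.exists_left_inv
  have := combP_mul h w'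
  have e : w' * (y ^ n * w) = y ^ n := by linear_combination y ^ n * hw'
  rwa [e] at this

lemma combP_a (y h₁ h₂ : K) (a t₁ t₂ : ℕ) : CombP y h₁ h₂ a t₁ t₂ (y ^ a) :=
  ⟨0, 0, 1, by ring, by ring, by ring⟩

lemma combP_min {y h₁ h₂ : K} {a t₁ t₂ i j : ℕ} (hi : CombP y h₁ h₂ a t₁ t₂ (y ^ i))
    (hj : CombP y h₁ h₂ a t₁ t₂ (y ^ j)) : CombP y h₁ h₂ a t₁ t₂ (y ^ min i j) := by
  rcases min_choice i j with h | h <;> rw [h] <;> assumption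

/-- Chain ring property of `𝓚`. -/
structure ChainP (y : K) (N : ℕ) : Prop where
  nil : y ^ N = 0
  ann : ∀ i ≤ N, ∀ c : K, y ^ i * c = 0 → y ^ (N - i) ∣ c
  nt : (1 : K) ≠ 0
  un : ∀ c : K, IsUnit c ∨ y ∣ c

lemma ChainP.pow_zero {y : K} {N : ℕ} (H : ChainP y N) {i : ℕ} (h : y ^ i = 0) : N ≤ i := by
  by_contra hlt
  push Not at hlt
  obtain ⟨c, hc⟩ := H.ann i hlt.le 1 (by rw [h]; ring)
  apply H.nt
  have : (1 : K) ^ N = (y ^ (N - i) * c) ^ N := by rw [← hc]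
  rw [one_pow, mul_pow, ← pow_mul] at this
  rw [this, pow_eq_zero_of_le (Nat.le_mul_of_pos_left N (by omega)) H.nil, zero_mul]

lemma ChainP.le_of_dvd {y : K} {N : ℕ} (H : ChainP y N) {i j : ℕ} (hi : i ≤ N)
    (h : y ^ i ∣ y ^ j) : i ≤ j := by
  have : y ^ (N - i + j) = 0 := by
    obtain ⟨c, hc⟩ := h
    rw [pow_add, hc, ← mul_assoc, ← pow_add, Nat.sub_add_cancel hi, H.nil, zero_mul]
  have := H.pow_zero this
  omega

lemma ChainP.sInf_eq {y : K} {N : ℕ} (H : ChainP y N) (P : K → Prop) (M : ℕ) (hM : M ≤ N)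
    (h1 : P (y ^ M)) (h2 : ∀ v, P v → y ^ M ∣ v) : sInf {k | P (y ^ k)} = M := by
  apply le_antisymm
  · exact Nat.sInf_le h1
  · exact le_csInf ⟨M, h1⟩ fun k hk => H.le_of_dvd hM (h2 _ hk)

lemma ChainP.unit_add {y : K} {N : ℕ} (H : ChainP y N) (hN : 0 < N) {w z : K} (hw : IsUnit w)
    {i : ℕ} (hi : 0 < i) : IsUnit (w + y ^ i * z) := by
  rcases H.un (w + y ^ i * z) with h | h
  · exact h
  exfalso
  have : y ∣ w := (dvd_add_left (dvd_mul_of_dvd_left (dvd_pow_self y hi.ne') z)).1 h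
  have hy : IsUnit y := isUnit_of_dvd_unit this hw
  have := hy.pow N
  rw [H.nil] at this
  obtain ⟨c, hc⟩ := this.exists_left_inv
  exact H.nt (by rw [← hc, mul_zero])

lemma ChainP.alpha {y : K} {N : ℕ} (H : ChainP y N) (d : K) (α : ℕ)
    (hα : α = sSup {k : ℕ | k ≤ N ∧ y ^ k ∣ d}) :
    ∃ w, d = y ^ α * w ∧ (IsUnit w ∨ N = α) := by
  have hb : BddAbove {k : ℕ | k ≤ N ∧ y ^ k ∣ d} := ⟨N, fun k hk => hk.1⟩
  have hmem : α ∈ {k : ℕ | k ≤ N ∧ y ^ k ∣ d} := by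
    rw [hα]; exact Nat.sSup_mem ⟨0, by simp⟩ hb
  obtain ⟨hle, w, hw⟩ := hmem
  refine ⟨w, hw, ?_⟩
  rcases H.un w with h | ⟨c, hc⟩
  · exact Or.inl h
  right
  by_contra hne
  have : α + 1 ≤ α := by
    conv_rhs => rw [hα]
    exact le_csSup hb ⟨by omega, c, by rw [hw, hc]; ring⟩
  omega

lemma ChainP.sum_val {y : K} {N : ℕ} (H : ChainP y N) (hN : 0 < N) {w z : K} (hw : IsUnit w)
    (hz : IsUnit z) {i j : ℕ} (hij : i ≠ j) :
    ∃ c, IsUnit c ∧ y ^ i * w + y ^ j * z = y ^ min i j * c := by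
  rcases lt_or_gt_of_ne hij with h | h
  · refine ⟨w + y ^ (j - i) * z, H.unit_add hN hw (by omega), ?_⟩
    rw [min_eq_left h.le, mul_add, ← mul_assoc, ← pow_add, Nat.add_sub_cancel' h.le]
  · refine ⟨z + y ^ (i - j) * w, H.unit_add hN hz (by omega), ?_⟩
    rw [min_eq_right h.le, mul_add, ← mul_assoc, ← pow_add, Nat.add_sub_cancel' h.le, add_comm]

/-- Case `h₁ = 0`. -/
lemma ChainP.caseZero {y : K} {N : ℕ} (H : ChainP y N) {h₂ : K} {a t₁ t₂ : ℕ} (ha : a < N) :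
    CombP y 0 h₂ a t₁ t₂ (y ^ (N + t₂ - a) * h₂) ∧
    ∀ v, CombP y 0 h₂ a t₁ t₂ v → ∃ p e, v = p * (y ^ (N + t₂ - a) * h₂) + y ^ a * e := by
  have e1 : y ^ (N + t₂ - a) = y ^ (N - a) * y ^ t₂ := by rw [← pow_add]; congr 1; omega
  have e2 : y ^ (N - a) * y ^ a = 0 := by rw [← pow_add, Nat.sub_add_cancel ha.le, H.nil]
  constructor
  · exact ⟨y ^ (N - a), 0, 0, e2, by ring, by rw [e1]; ring⟩
  · rintro v ⟨f0, f1, f2, g0, g1, g2⟩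
    obtain ⟨p, hp⟩ := H.ann a ha.le f0 (by rw [mul_comm, g0])
    refine ⟨p, f2, ?_⟩
    rw [← g2, hp, e1]; ring

lemma ChainP.caseLow {y : K} {N : ℕ} (H : ChainP y N) {h₁ h₂ : K} {a t₁ t₂ : ℕ} (ha : a < N)
    (hl : 2 * a ≤ N + t₁) (D : K)
    (hD : D = y ^ (N + t₂ - a) * h₂ - y ^ (N + 2 * t₁ - 2 * a) * h₁ ^ 2) :
    CombP y h₁ h₂ a t₁ t₂ D ∧
    ∀ v, CombP y h₁ h₂ a t₁ t₂ v → ∃ p e, v = p * D + y ^ a * e := by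
  subst hD
  have e1 : y ^ (N + t₂ - a) = y ^ (N - a) * y ^ t₂ := by rw [← pow_add]; congr 1; omega
  have e2 : y ^ (N - a) * y ^ a = 0 := by rw [← pow_add, Nat.sub_add_cancel ha.le, H.nil]
  have e3 : y ^ (N + 2 * t₁ - 2 * a) = y ^ (N + t₁ - 2 * a) * y ^ t₁ := by
    rw [← pow_add]; congr 1; omega
  have e4 : y ^ (N - a) * y ^ t₁ = y ^ a * y ^ (N + t₁ - 2 * a) := by
    rw [← pow_add, ← pow_add]; congr 1; omega
  constructor
  · refine ⟨y ^ (N - a), - y ^ (N + t₁ - 2 * a) * h₁, 0, e2, ?_, ?_⟩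
    · linear_combination h₁ * e4
    · rw [e1, e3]; ring
  · rintro v ⟨f0, f1, f2, g0, g1, g2⟩
    obtain ⟨p, hp⟩ := H.ann a ha.le f0 (by rw [mul_comm, g0])
    obtain ⟨q, hq⟩ := H.ann a ha.le (y ^ (N + t₁ - 2 * a) * p * h₁ + f1) (by
      rw [← g1, hp]; linear_combination - p * h₁ * e4)
    refine ⟨p, f2 + y ^ (N + t₁ - 2 * a) * q * h₁, ?_⟩
    rw [← g2, hp, e1, e3]
    linear_combination y ^ t₁ * h₁ * hq + q * h₁ * e4

lemma ChainP.caseHigh {y : K} {N : ℕ} (H : ChainP y N) {h₁ h₂ k : K} {a t₁ t₂ : ℕ} (ha : a < N)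
    (hk : k * h₁ = 1) (hta : t₁ < a) (hl : N + t₁ ≤ 2 * a) (D : K)
    (hD : D = y ^ t₁ * h₁ - y ^ (a + t₂ - t₁) * (h₂ * k)) :
    CombP y h₁ h₂ a t₁ t₂ D ∧ CombP y h₁ h₂ a t₁ t₂ (y ^ (N + t₂ - t₁) * h₂) ∧
    ∀ v, CombP y h₁ h₂ a t₁ t₂ v → ∃ p q e, v = p * D + q * (y ^ (N + t₂ - t₁) * h₂) + y ^ a * e := by
  subst hD
  have e1 : y ^ (a + t₂ - t₁) = y ^ (a - t₁) * y ^ t₂ := by rw [← pow_add]; congr 1; omega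
  have e2 : y ^ (N - a) * y ^ a = 0 := by rw [← pow_add, Nat.sub_add_cancel ha.le, H.nil]
  have e3 : y ^ (N + t₂ - t₁) = y ^ (N - t₁) * y ^ t₂ := by rw [← pow_add]; congr 1; omega
  have e4 : y ^ (a - t₁) * y ^ t₁ = y ^ a := by rw [← pow_add]; congr 1; omega
  have e5 : y ^ (a - t₁) = y ^ (N - a) * y ^ (2 * a - N - t₁) := by
    rw [← pow_add]; congr 1; omega
  have e6 : y ^ (N - t₁) = y ^ (N - a) * y ^ (a - t₁) := by rw [← pow_add]; congr 1; omega
  have e7 : y ^ (N - t₁) * y ^ t₁ = 0 := by rw [← pow_add, Nat.sub_add_cancel (by omega), H.nil]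
  have e8 : y ^ (N - a) * y ^ t₁ = y ^ (N + t₁ - a) := by rw [← pow_add]; congr 1; omega
  have e9 : y ^ (N + t₁ - a) * y ^ (2 * a - N - t₁) = y ^ a := by
    rw [← pow_add]; congr 1; omega
  refine ⟨?_, ?_, ?_⟩
  · refine ⟨- y ^ (a - t₁) * k, 1, 0, ?_, ?_, ?_⟩
    · rw [e5]; linear_combination - k * y ^ (2 * a - N - t₁) * e2
    · linear_combination - k * h₁ * e4 - y ^ a * hk
    · rw [e1]; ring
  · refine ⟨y ^ (N - t₁), 0, 0, ?_, ?_, ?_⟩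
    · rw [e6]; linear_combination y ^ (a - t₁) * e2
    · linear_combination h₁ * e7
    · rw [e3]; ring
  · rintro v ⟨f0, f1, f2, g0, g1, g2⟩
    obtain ⟨p, hp⟩ := H.ann a ha.le f0 (by rw [mul_comm, g0])
    obtain ⟨q, hq⟩ := H.ann (N + t₁ - a) (by omega) (p * h₁ + y ^ (2 * a - N - t₁) * f1) (by
      rw [← g1, hp]; linear_combination f1 * e9 - p * h₁ * e8)
    have e10 : N - (N + t₁ - a) = a - t₁ := by omega
    rw [e10] at hq
    refine ⟨f1, q * k, f2, ?_⟩
    rw [← g2, hp, e1, e3, e6]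
    have hq' : p = - y ^ (2 * a - N - t₁) * f1 * k + y ^ (a - t₁) * q * k := by
      linear_combination k * hq - p * hk
    linear_combination y ^ (N - a) * y ^ t₂ * h₂ * hq' + f1 * k * y ^ t₂ * h₂ * e5

/-- The abstract version of the main statement. -/
lemma ChainP.main {y : K} {N : ℕ} (H : ChainP y N) {a t₁ t₂ U : ℕ} {h₁ h₂ : K}
    (ha1 : 1 ≤ a) (ha2 : a < N)
    (hh₁ : h₁ = 0 ∨ IsUnit h₁) (hh₂ : h₂ = 0 ∨ IsUnit h₂)
    (hU1 : h₁ ≠ 0 → U = min a (N + t₁ - a))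
    (ht₁ : t₁ < U)
    (V : ℕ) (hV : V = sInf {k : ℕ | CombP y h₁ h₂ a t₁ t₂ (y ^ k)})
    (α₁ : ℕ)
    (hα₁ : α₁ = sSup {k : ℕ | k ≤ N ∧ y ^ k ∣ (h₁ - h₂ * Ring.inverse h₁)}) :
    (h₁ = 0 → h₂ = 0 → V = a) ∧
    (h₁ = 0 → h₂ ≠ 0 → V = min a (N + t₂ - a)) ∧
    (h₁ ≠ 0 → h₂ = 0 → 2 * a ≤ N + t₁ →
      V = min a (N + 2 * t₁ - 2 * a)) ∧
    (h₁ ≠ 0 → h₂ ≠ 0 → 2 * a ≤ N + t₁ → 2 * t₁ ≠ a + t₂ →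
      V = min a (min (N + t₂ - a) (N + 2 * t₁ - 2 * a))) ∧
    (h₁ ≠ 0 → h₂ ≠ 0 → 2 * a ≤ N + t₁ → 2 * t₁ = a + t₂ →
      V = min a (N + t₂ + α₁ - a)) ∧
    (h₁ ≠ 0 → h₂ = 0 → N + t₁ ≤ 2 * a → V = t₁) ∧
    (h₁ ≠ 0 → h₂ ≠ 0 → N + t₁ ≤ 2 * a → 2 * t₁ ≠ a + t₂ →
      V = min t₁ (a + t₂ - t₁)) ∧
    (h₁ ≠ 0 → h₂ ≠ 0 → N + t₁ ≤ 2 * a → 2 * t₁ = a + t₂ →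
      V = min (N + t₁ - a) (t₁ + α₁)) := by
  -- finishing step shared by the first five cases
  have fin1 : ∀ (D w : K) (δ : ℕ), D = y ^ δ * w → (IsUnit w ∨ a ≤ δ) →
      (CombP y h₁ h₂ a t₁ t₂ D ∧
        ∀ v, CombP y h₁ h₂ a t₁ t₂ v → ∃ p e, v = p * D + y ^ a * e) → V = min a δ := by
    rintro D w δ rfl hw ⟨hc, hd⟩
    rw [hV]
    apply H.sInf_eq _ _ (by omega)
    · rcases hw with hw | hw
      · exact combP_min (combP_a _ _ _ _ _ _) (combP_pow_of_unit hc hw)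
      · rw [min_eq_left hw]; exact combP_a _ _ _ _ _ _
    · intro v hv
      obtain ⟨p, e, rfl⟩ := hd v hv
      exact dvd_add (dvd_mul_of_dvd_right (dvd_mul_of_dvd_left (pow_dvd_pow _ (min_le_right _ _)) _) _)
        (dvd_mul_of_dvd_left (pow_dvd_pow _ (min_le_left _ _)) _)
  have hu₁ : h₁ ≠ 0 → IsUnit h₁ := fun h => hh₁.resolve_left h
  have hu₂ : h₂ ≠ 0 → IsUnit h₂ := fun h => hh₂.resolve_left h
  have hN : 0 < N := by omega
  refine ⟨?_, ?_, ?_, ?_, ?_, ?_, ?_, ?_⟩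
  · intro z1 z2
    have := fin1 (y ^ (N + t₂ - a) * h₂) 0 a (by rw [z2]; ring) (Or.inr le_rfl)
      (by rw [z1]; exact H.caseZero ha2)
    simpa using this
  · intro z1 z2
    exact fin1 (y ^ (N + t₂ - a) * h₂) h₂ _ rfl (Or.inl (hu₂ z2))
      (by rw [z1]; exact H.caseZero ha2)
  · intro z1 z2 hl
    refine fin1 _ (- h₁ ^ 2) _ ?_ (Or.inl ((hu₁ z1).pow 2).neg) (H.caseLow ha2 hl _ rfl)
    rw [z2]; ring
  · intro z1 z2 hl hne
    obtain ⟨c, hc, hs⟩ := H.sum_val hN (hu₂ z2) ((hu₁ z1).pow 2).neg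
      (i := N + t₂ - a) (j := N + 2 * t₁ - 2 * a) (by omega)
    refine fin1 _ c _ ?_ (Or.inl hc) (H.caseLow ha2 hl _ rfl)
    rw [← hs]; ring
  · intro z1 z2 hl he
    obtain ⟨w, hw, hw'⟩ := H.alpha _ _ hα₁
    have hk := Ring.inverse_mul_cancel h₁ (hu₁ z1)
    refine fin1 _ (- (w * h₁)) _ ?_ ?_ (H.caseLow ha2 hl _ rfl)
    · have e1 : N + 2 * t₁ - 2 * a = N + t₂ - a := by omega
      have e2 : y ^ (N + t₂ + α₁ - a) = y ^ (N + t₂ - a) * y ^ α₁ := by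
        rw [← pow_add]; congr 1; omega
      rw [e1, e2]
      linear_combination - y ^ (N + t₂ - a) * h₁ * hw - y ^ (N + t₂ - a) * h₂ * hk
    · rcases hw' with h | h
      · exact Or.inl (h.mul (hu₁ z1)).neg
      · right; omega
  · intro z1 z2 hl
    have hU := hU1 z1
    have hk := Ring.inverse_mul_cancel h₁ (hu₁ z1)
    obtain ⟨c1, c2, c3⟩ := H.caseHigh (h₂ := h₂) (t₂ := t₂) ha2 hk (by omega) hl _ rfl
    rw [hV]
    apply H.sInf_eq _ _ (by omega)
    · apply combP_pow_of_unit _ (hu₁ z1)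
      convert c1 using 1
      rw [z2]; ring
    · intro v hv
      obtain ⟨p, q, e, rfl⟩ := c3 v hv
      refine dvd_add ?_ (dvd_mul_of_dvd_left (pow_dvd_pow _ (by omega)) _)
      exact ⟨p * h₁, by rw [z2]; ring⟩
  · intro z1 z2 hl hne
    have hU := hU1 z1
    have hk := Ring.inverse_mul_cancel h₁ (hu₁ z1)
    have hk' : IsUnit (Ring.inverse h₁) := IsUnit.of_mul_eq_one _ hk
    obtain ⟨c1, c2, c3⟩ := H.caseHigh (h₂ := h₂) (t₂ := t₂) ha2 hk (by omega) hl _ rfl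
    obtain ⟨c, hc, hs⟩ := H.sum_val hN (hu₁ z1) ((hu₂ z2).mul hk').neg
      (i := t₁) (j := a + t₂ - t₁) (by omega)
    have hs' : y ^ t₁ * h₁ - y ^ (a + t₂ - t₁) * (h₂ * Ring.inverse h₁) =
      y ^ min t₁ (a + t₂ - t₁) * c := by rw [← hs]; ring
    rw [hs'] at c1 c3
    rw [hV]
    apply H.sInf_eq _ _ (by omega)
    · exact combP_pow_of_unit c1 hc
    · intro v hv
      obtain ⟨p, q, e, rfl⟩ := c3 v hv
      refine dvd_add (dvd_add ?_ ?_) (dvd_mul_of_dvd_left (pow_dvd_pow _ (by omega)) _)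
      · exact ⟨p * c, by ring⟩
      · exact dvd_mul_of_dvd_right (dvd_mul_of_dvd_left (pow_dvd_pow _ (by omega)) _) _
  · intro z1 z2 hl he
    have hU := hU1 z1
    have hk := Ring.inverse_mul_cancel h₁ (hu₁ z1)
    obtain ⟨c1, c2, c3⟩ := H.caseHigh (h₂ := h₂) (t₂ := t₂) ha2 hk (by omega) hl _ rfl
    obtain ⟨w, hw, hw'⟩ := H.alpha _ _ hα₁
    have hs' : y ^ t₁ * h₁ - y ^ (a + t₂ - t₁) * (h₂ * Ring.inverse h₁) =
        y ^ (t₁ + α₁) * w := by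
      have e1 : a + t₂ - t₁ = t₁ := by omega
      rw [e1, pow_add]; linear_combination y ^ t₁ * hw
    have e2 : N + t₂ - t₁ = N + t₁ - a := by omega
    rw [hs'] at c1 c3
    rw [e2] at c2 c3
    have c2' := combP_pow_of_unit c2 (hu₂ z2)
    rw [hV]
    apply H.sInf_eq _ _ (by omega)
    · rcases hw' with h | h
      · exact combP_min c2' (combP_pow_of_unit c1 h)
      · rw [min_eq_left (by omega)]; exact c2'
    · intro v hv
      obtain ⟨p, q, e, rfl⟩ := c3 v hv
      refine dvd_add (dvd_add ?_ ?_) (dvd_mul_of_dvd_left (pow_dvd_pow _ (by omega)) _)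
      · exact dvd_mul_of_dvd_right (dvd_mul_of_dvd_left (pow_dvd_pow _ (by omega)) _) _
      · exact dvd_mul_of_dvd_right (dvd_mul_of_dvd_left (pow_dvd_pow _ (by omega)) _) _

end chain

lemma gK_eq (m s : ℕ) : gK m s = (X + 1) ^ (2 ^ s) := by
  have : CharP (Fq m)[X] 2 := inferInstance
  rw [add_pow_char_pow, one_pow]

lemma yK_eq (m s : ℕ) : xK m s + 1 = AdjoinRoot.mk (gK m s) (X + 1) := by
  simp [xK]

lemma chainK (m s : ℕ) : ChainP (xK m s + 1) (2 ^ s) where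
  nil := by
    rw [yK_eq, ← map_pow, ← gK_eq, AdjoinRoot.mk_self]
  ann := by
    intro i hi c hc
    obtain ⟨p, rfl⟩ := AdjoinRoot.mk_surjective c
    rw [yK_eq, ← map_pow, ← map_mul, AdjoinRoot.mk_eq_zero, gK_eq] at hc
    have hne : ((X + 1 : (Fq m)[X]) ^ i) ≠ 0 := pow_ne_zero _ (X_add_C_ne_zero (1 : Fq m))
    have hsp : (X + 1 : (Fq m)[X]) ^ (2 ^ s) = (X + 1) ^ i * (X + 1) ^ (2 ^ s - i) := by
      rw [← pow_add]; congr 1; omega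
    rw [hsp] at hc
    rw [yK_eq, ← map_pow]
    exact map_dvd _ ((mul_dvd_mul_iff_left hne).1 hc)
  nt := by
    intro h
    have h1 : AdjoinRoot.mk (gK m s) 1 = 0 := by rw [map_one]; exact h
    rw [AdjoinRoot.mk_eq_zero] at h1
    have h2 : IsUnit ((X + 1 : (Fq m)[X]) ^ (2 ^ s)) := by
      rw [← gK_eq]; exact isUnit_of_dvd_one h1
    have h3 : IsUnit (X + 1 : (Fq m)[X]) := (isUnit_pow_iff (by positivity)).1 h2
    have h4 := (irreducible_X_sub_C (-1 : Fq m)).not_isUnit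
    simp only [map_neg, map_one, sub_neg_eq_add] at h4
    exact h4 h3
  un := by
    intro c
    obtain ⟨p, rfl⟩ := AdjoinRoot.mk_surjective c
    have h4 := irreducible_X_sub_C (-1 : Fq m)
    simp only [map_neg, map_one, sub_neg_eq_add] at h4
    rcases (em (X + 1 ∣ p)).symm.imp_left h4.coprime_iff_not_dvd.2 with h | h
    · left
      have h5 : IsCoprime ((X + 1 : (Fq m)[X]) ^ (2 ^ s)) p := h.pow_left
      rw [← gK_eq] at h5
      obtain ⟨b, d, hbd⟩ := h5
      have := congrArg (AdjoinRoot.mk (gK m s)) hbd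
      rw [map_add, map_mul, AdjoinRoot.mk_self, mul_zero, zero_add, map_mul, map_one] at this
      exact IsUnit.of_mul_eq_one _ (by rw [mul_comm]; exact this)
    · right
      rw [yK_eq]; exact map_dvd _ h

/-- The ring `𝓚[u]/⟨u³⟩`. -/
abbrev SK (m s : ℕ) : Type := AdjoinRoot (X ^ 3 : (KK m s)[X])

/-- The map `R₃ → 𝓚[u]/⟨u³⟩`. -/
def psiR3 (m s : ℕ) : R3 m →+* SK m s :=
  AdjoinRoot.lift ((AdjoinRoot.of (X ^ 3 : (KK m s)[X])).comp (algebraMap (Fq m) (KK m s)))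
    (AdjoinRoot.root _) (by
      rw [eval₂_X_pow, ← AdjoinRoot.mk_X, ← map_pow, AdjoinRoot.mk_self])

/-- The map `𝓡 → 𝓚[u]/⟨u³⟩`. -/
def phiRS (m s : ℕ) : RR m s →+* SK m s :=
  AdjoinRoot.lift (psiR3 m s) (AdjoinRoot.of (X ^ 3 : (KK m s)[X]) (xK m s)) (by
    simp only [gR, eval₂_add, eval₂_pow, eval₂_X, eval₂_one]
    rw [← map_pow, ← map_one (AdjoinRoot.of (X ^ 3 : (KK m s)[X])), ← map_add,
      xK_pow_add_one, map_zero])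

lemma phi_x (m s : ℕ) : phiRS m s (xR m s) = AdjoinRoot.of _ (xK m s) :=
  AdjoinRoot.lift_root _

lemma phi_u (m s : ℕ) : phiRS m s (uR m s) = AdjoinRoot.root _ := by
  have h : phiRS m s (uR m s) = psiR3 m s (uu m) := AdjoinRoot.lift_of _
  rw [h]
  exact AdjoinRoot.lift_root _

lemma KtoR_x (m s : ℕ) : KtoR m s (xK m s) = xR m s := AdjoinRoot.lift_root _

lemma phi_K (m s : ℕ) (c : KK m s) : phiRS m s (KtoR m s c) = AdjoinRoot.of _ c := by
  have : (phiRS m s).comp (KtoR m s) = AdjoinRoot.of (X ^ 3 : (KK m s)[X]) := by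
    apply AdjoinRoot.ringHom_ext
    · ext z
      have h1 : KtoR m s (AdjoinRoot.of _ z) =
          algebraMap (R3 m) (RR m s) (algebraMap (Fq m) (R3 m) z) := AdjoinRoot.lift_of _
      have h2 : phiRS m s (algebraMap (R3 m) (RR m s) (algebraMap (Fq m) (R3 m) z)) =
          psiR3 m s (algebraMap (Fq m) (R3 m) z) := AdjoinRoot.lift_of _
      have h3 : psiR3 m s (algebraMap (Fq m) (R3 m) z) =
        AdjoinRoot.of (X ^ 3 : (KK m s)[X]) (algebraMap (Fq m) (KK m s) z) := AdjoinRoot.lift_of _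
      rw [RingHom.comp_apply, RingHom.comp_apply, h1, h2, h3]
      rfl
    · have h1 : KtoR m s (AdjoinRoot.root _) = xR m s := KtoR_x m s
      rw [RingHom.comp_apply, h1, phi_x]; rfl
  exact congrArg (fun f => f c) this

lemma uR_cube (m s : ℕ) : uR m s ^ 3 = 0 := by
  have h : uu m ^ 3 = 0 := by
    rw [uu, ← AdjoinRoot.mk_X, ← map_pow, AdjoinRoot.mk_self]
  rw [uR, ← map_pow, h, map_zero]

lemma KtoR_y (m s : ℕ) : KtoR m s (xK m s + 1) = xR m s + 1 := by
  rw [map_add, KtoR_x, map_one]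

lemma phi_y (m s : ℕ) : phiRS m s (xR m s + 1) = AdjoinRoot.of _ (xK m s + 1) := by
  rw [← KtoR_y, phi_K]

lemma mem_iff_combP (m s a t₁ t₂ k : ℕ) (h₁ h₂ : KK m s) :
    uR m s ^ 2 * (xR m s + 1) ^ k ∈ Ideal.span
      {(xR m s + 1) ^ a + uR m s * (xR m s + 1) ^ t₁ * KtoR m s h₁ +
        uR m s ^ 2 * (xR m s + 1) ^ t₂ * KtoR m s h₂} ↔
    CombP (xK m s + 1) h₁ h₂ a t₁ t₂ ((xK m s + 1) ^ k) := by
  constructor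
  · intro h
    rw [Ideal.mem_span_singleton'] at h
    obtain ⟨r, hr⟩ := h
    have h' := congrArg (phiRS m s) hr
    simp only [map_mul, map_pow, phi_y, phi_u, phi_K, map_add (phiRS m s) (_ + _) _,
      map_add (phiRS m s) (_ ^ _) (_ * _)] at h'
    apply combP_of_quot _ _ _ _ _ _ _ (phiRS m s r)
    rw [h', map_pow]
  · intro h
    have := mem_of_combP (KtoR m s) (uR m s) (uR_cube m s) _ _ _ _ _ _ _ h
    rwa [map_pow, KtoR_y] at this

/-- The value of `V = min{k : u²(x+1)^k ∈ C₅}` for a Type 5 code. -/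
theorem stmt15 (m s : ℕ) (hm : 0 < m) (hs : 0 < s)
    (a t₁ t₂ U : ℕ) (h₁ h₂ : KK m s)
    (ha1 : 1 ≤ a) (ha2 : a ≤ 2 ^ s - 1)
    (hh₁ : h₁ = 0 ∨ IsUnit h₁) (hh₂ : h₂ = 0 ∨ IsUnit h₂)
    (hU0 : h₁ = 0 → U = a)
    (hU1 : h₁ ≠ 0 → U = min a (2 ^ s + t₁ - a))
    (ht₁ : t₁ < U)
    (C : Ideal (RR m s))
    (hC : C = Ideal.span
      {(xR m s + 1) ^ a + uR m s * (xR m s + 1) ^ t₁ * KtoR m s h₁ +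
        uR m s ^ 2 * (xR m s + 1) ^ t₂ * KtoR m s h₂})
    (V : ℕ) (hV : V = sInf {k : ℕ | uR m s ^ 2 * (xR m s + 1) ^ k ∈ C})
    (ht₂ : t₂ < V)
    (α₁ : ℕ)
    (hα₁ : α₁ = sSup {k : ℕ | k ≤ 2 ^ s ∧
      (xK m s + 1) ^ k ∣ (h₁ - h₂ * Ring.inverse h₁)}) :
    (h₁ = 0 → h₂ = 0 → V = a) ∧
    (h₁ = 0 → h₂ ≠ 0 → V = min a (2 ^ s + t₂ - a)) ∧
    (h₁ ≠ 0 → h₂ = 0 → 2 * a ≤ 2 ^ s + t₁ →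
      V = min a (2 ^ s + 2 * t₁ - 2 * a)) ∧
    (h₁ ≠ 0 → h₂ ≠ 0 → 2 * a ≤ 2 ^ s + t₁ → 2 * t₁ ≠ a + t₂ →
      V = min a (min (2 ^ s + t₂ - a) (2 ^ s + 2 * t₁ - 2 * a))) ∧
    (h₁ ≠ 0 → h₂ ≠ 0 → 2 * a ≤ 2 ^ s + t₁ → 2 * t₁ = a + t₂ →
      V = min a (2 ^ s + t₂ + α₁ - a)) ∧
    (h₁ ≠ 0 → h₂ = 0 → 2 ^ s + t₁ ≤ 2 * a → V = t₁) ∧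
    (h₁ ≠ 0 → h₂ ≠ 0 → 2 ^ s + t₁ ≤ 2 * a → 2 * t₁ ≠ a + t₂ →
      V = min t₁ (a + t₂ - t₁)) ∧
    (h₁ ≠ 0 → h₂ ≠ 0 → 2 ^ s + t₁ ≤ 2 * a → 2 * t₁ = a + t₂ →
      V = min (2 ^ s + t₁ - a) (t₁ + α₁)) := by

  have hN : 0 < 2 ^ s := by positivity
  refine (chainK m s).main ha1 (by omega) hh₁ hh₂ hU1 ht₁ V ?_ α₁ hα₁
  rw [hV, hC]
  congr 1
  ext k
  exact mem_iff_combP m s a t₁ t₂ k h₁ h₂
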